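/- Every model of the theory T_{P₃} has Scott rank strictly less than ω₁, where (P₃, ≤, δ₃) ∈ ℙ is given by P₃ = {p_n, q_n : n < ω} with the only strict order relations being p_n < q_m for n ≤ m, and δ₃ identically equal to 2. -/

import Mathlib

open FirstOrder

universe u v w

namespace ScottTools

variable (L : FirstOrder.Language.{u, v}) (M : Type w) (N : Type w) [L.Structure M] [L.Structure N]

/-- Two tuples (of the same length) have the same quantifier-free type. -/
def QFEquiv {n : ℕ} (a : Fin n → M) (b : Fin n → N) : Prop :=
  ∀ φ : L.Formula (Fin n), φ.IsQF → (φ.Realize a ↔ φ.Realize b)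

/-- The ordinal-indexed back-and-forth equivalence `(M, ā) ≡_α (N, b̄)`:
`≡₀` is equality of quantifier-free types, `≡_{α+1}` is the back-and-forth condition
with respect to `≡_α`, and limit stages are intersections. -/
def BFEquiv : Ordinal.{w} → (n : ℕ) → (Fin n → M) → (Fin n → N) → Prop
  | α, n, a, b =>
    QFEquiv L M N a b ∧
    ∀ β : Ordinal.{w}, β < α →
      (∀ x : M, ∃ y : N, BFEquiv β (n + 1) (Fin.snoc a x) (Fin.snoc b y)) ∧
      (∀ y : N, ∃ x : M, BFEquiv β (n + 1) (Fin.snoc a x) (Fin.snoc b y))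
  termination_by α => α

/-- `(M, ā) ≡_∞ (N, b̄)`: back-and-forth equivalent for all ordinals. -/
def BFEquivInf (n : ℕ) (a : Fin n → M) (b : Fin n → N) : Prop :=
  ∀ α : Ordinal.{w}, BFEquiv L M N α n a b

/-- The Scott rank of a structure: the least ordinal `α` such that any two finite tuples
that are `≡_α`-equivalent are `≡_∞`-equivalent. -/
noncomputable def ScottRank : Ordinal.{w} :=
  sInf {α : Ordinal.{w} | ∀ (n : ℕ) (a b : Fin n → M),
    BFEquiv L M M α n a b → BFEquivInf L M M n a b}

/-- `B` is a base for `M`: distinct elements of `M` have distinct complete first-order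
types over `B`. -/
def IsBase (B : Set M) : Prop :=
  ∀ a b : M,
    (∀ (k : ℕ) (p : Fin k → M), (∀ i, p i ∈ B) →
      ∀ φ : L.Formula (Fin (k + 1)),
        (φ.Realize (Fin.snoc p a) ↔ φ.Realize (Fin.snoc p b))) →
    a = b

end ScottTools

namespace PP

open FirstOrder

/-- The language `ℒ_P`: one binary relation symbol `E_p` for each `p : P`. -/
def LP (P : Type u) : FirstOrder.Language :=
  ⟨fun _ => Empty, fun k => PLift (k = 2) × P⟩

/-- The interpretation of the relation symbol `E_p`. -/
def Rel {P : Type u} {M : Type w} [(LP P).Structure M] (p : P) (a b : M) : Prop :=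
  Language.Structure.RelMap (L := LP P) (M := M) (n := 2) (⟨⟨rfl⟩, p⟩ : PLift (2 = 2) × P) ![a, b]

/-- `M` satisfies the axioms of `T_P` (with respect to the order `le` on `P` and the
splitting function `δ`): each `E_q` is an equivalence relation; `E_q` refines `E_{q'}` for
`q' ≤ q` and partitions each `E_{<q}`-class into exactly `δ q` classes; and coherent
sequences indexed by finite downward-closed sets have common refinements. -/
def ModelsTP {P : Type u} (le : P → P → Prop) (δ : P → ℕ) (M : Type w)
    [(LP P).Structure M] : Prop :=
  (∀ p : P, Equivalence (fun a b : M => Rel p a b)) ∧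
  (∀ p q : P, le p q → ∀ a b : M, Rel q a b → Rel p a b) ∧
  (∀ (q : P) (a : M), ∃ f : Fin (δ q) → M,
      (∀ (i : Fin (δ q)) (p : P), le p q → p ≠ q → Rel p (f i) a) ∧
      (∀ i j : Fin (δ q), i ≠ j → ¬ Rel q (f i) (f j)) ∧
      (∀ b : M, (∀ p : P, le p q → p ≠ q → Rel p b a) → ∃ i, Rel q b (f i))) ∧
  (∀ Q : Finset P, (∀ p q : P, le p q → q ∈ Q → p ∈ Q) →
      ∀ a : P → M, (∀ p q : P, p ∈ Q → q ∈ Q → le p q → Rel p (a p) (a q)) →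
      ∃ z : M, ∀ q ∈ Q, Rel q z (a q))

end PP

open ScottTools PP

/-- The partial order `P₃`: elements `pₙ = Sum.inl n` and `qₙ = Sum.inr n`, where the only
strict order relations are `pₙ < q_m` for `n ≤ m`. -/
def le3 : ℕ ⊕ ℕ → ℕ ⊕ ℕ → Prop
  | Sum.inl n, Sum.inl m => n = m
  | Sum.inl n, Sum.inr m => n ≤ m
  | Sum.inr _, Sum.inl _ => False
  | Sum.inr n, Sum.inr m => n = m

/-!
A point of a model of `T_{P₃}` is a pair of binary sequences: `base` decides the relations
`E_{pₙ}`, while `E_{qₘ}` compares the bases up to `m` and the second sequence `fib` at `m`.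
Hence a map between tuples preserves the relations if and only if all points are displaced
(modulo 2) by the same sequence in `base`, and any two points are displaced equally in `fib` as
far as their bases agree.

Only countably many initial segments of `base` and of a displacement in `fib` exist, so from
some countable `α ≥ ω` on, the ones realized by `α`-equivalent pairs with the same base do not
shrink any more. Then a tuple-to-tuple map whose displacements occur between
`α + 2`-equivalent points extends forever. If a new point has the base of an old one, it suffices
to count the points sharing both of its sequences, for which `ω` rounds are enough. Otherwise
its base agrees with the old ones only up to some finite stage, so only finitely many values of
`fib` matter, and the choice of `α` allows these to be corrected without losing equivalence.
-/

open scoped Ordinal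

section BackAndForth

namespace ScottTools

variable {L : FirstOrder.Language.{u, v}} {M N K : Type w}
  [L.Structure M] [L.Structure N] [L.Structure K]

theorem QFEquiv.refl {n : ℕ} (a : Fin n → M) : QFEquiv L M M a a :=
  fun _ _ => Iff.rfl

theorem QFEquiv.symm {n : ℕ} {a : Fin n → M} {b : Fin n → N} (h : QFEquiv L M N a b) :
    QFEquiv L N M b a :=
  fun φ hφ => (h φ hφ).symm

theorem QFEquiv.trans {n : ℕ} {a : Fin n → M} {b : Fin n → N} {c : Fin n → K}
    (hab : QFEquiv L M N a b) (hbc : QFEquiv L N K b c) : QFEquiv L M K a c :=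
  fun φ hφ => (hab φ hφ).trans (hbc φ hφ)

theorem QFEquiv.comp {n m : ℕ} {a : Fin n → M} {b : Fin n → N} (h : QFEquiv L M N a b)
    (f : Fin m → Fin n) : QFEquiv L M N (a ∘ f) (b ∘ f) := by
  intro φ hφ
  simpa only [Language.Formula.realize_relabel] using h (φ.relabel f) (hφ.relabel _)

theorem qfEquiv_iff_isAtomic {n : ℕ} {a : Fin n → M} {b : Fin n → N} :
    QFEquiv L M N a b ↔
      ∀ φ : L.Formula (Fin n), φ.IsAtomic → (φ.Realize a ↔ φ.Realize b) := by
  refine ⟨fun h φ hφ => h φ hφ.isQF, fun h φ hφ => ?_⟩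
  induction hφ with
  | falsum => exact Iff.rfl
  | of_isAtomic hφ => exact h _ hφ
  | imp _ _ ih₁ ih₂ => exact imp_congr ih₁ ih₂

theorem bfEquiv_iff {α : Ordinal.{w}} {n : ℕ} {a : Fin n → M} {b : Fin n → N} :
    BFEquiv L M N α n a b ↔ QFEquiv L M N a b ∧ ∀ β < α,
      (∀ x, ∃ y, BFEquiv L M N β (n + 1) (Fin.snoc a x) (Fin.snoc b y)) ∧
      ∀ y, ∃ x, BFEquiv L M N β (n + 1) (Fin.snoc a x) (Fin.snoc b y) := by
  rw [BFEquiv]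

namespace BFEquiv

variable {α β : Ordinal.{w}} {n : ℕ} {a : Fin n → M} {b : Fin n → N}

theorem qfEquiv (h : BFEquiv L M N α n a b) : QFEquiv L M N a b :=
  (bfEquiv_iff.1 h).1

theorem mono (hβα : β ≤ α) (h : BFEquiv L M N α n a b) : BFEquiv L M N β n a b :=
  bfEquiv_iff.2 ⟨h.qfEquiv, fun γ hγ => (bfEquiv_iff.1 h).2 γ (hγ.trans_le hβα)⟩

theorem refl (α : Ordinal.{w}) (a : Fin n → M) : BFEquiv L M M α n a a := by
  induction α using WellFoundedLT.induction generalizing n with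
  | ind α ih =>
    exact bfEquiv_iff.2
      ⟨.refl a, fun β hβ => ⟨fun x => ⟨x, ih β hβ _⟩, fun x => ⟨x, ih β hβ _⟩⟩⟩

theorem symm (h : BFEquiv L M N α n a b) : BFEquiv L N M α n b a := by
  induction α using WellFoundedLT.induction generalizing n with
  | ind α ih =>
    refine bfEquiv_iff.2 ⟨h.qfEquiv.symm, fun β hβ => ?_⟩
    obtain ⟨forth, back⟩ := (bfEquiv_iff.1 h).2 β hβ
    exact ⟨fun y => (back y).imp fun _ => ih β hβ, fun x => (forth x).imp fun _ => ih β hβ⟩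

theorem trans {c : Fin n → K} (hab : BFEquiv L M N α n a b) (hbc : BFEquiv L N K α n b c) :
    BFEquiv L M K α n a c := by
  induction α using WellFoundedLT.induction generalizing n with
  | ind α ih =>
    refine bfEquiv_iff.2 ⟨hab.qfEquiv.trans hbc.qfEquiv, fun β hβ => ?_⟩
    obtain ⟨forth_ab, back_ab⟩ := (bfEquiv_iff.1 hab).2 β hβ
    obtain ⟨forth_bc, back_bc⟩ := (bfEquiv_iff.1 hbc).2 β hβ
    constructor
    · intro x
      obtain ⟨y, hxy⟩ := forth_ab x
      obtain ⟨z, hyz⟩ := forth_bc y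
      exact ⟨z, ih β hβ hxy hyz⟩
    · intro z
      obtain ⟨y, hyz⟩ := back_bc z
      obtain ⟨x, hxy⟩ := back_ab y
      exact ⟨x, ih β hβ hxy hyz⟩

theorem comp {m : ℕ} (h : BFEquiv L M N α n a b) (f : Fin m → Fin n) :
    BFEquiv L M N α m (a ∘ f) (b ∘ f) := by
  induction α using WellFoundedLT.induction generalizing n m with
  | ind α ih =>
    have snoc_comp {A : Type w} (c : Fin n → A) (z : A) : (Fin.snoc (c ∘ f) z : Fin (m + 1) → A) =
        (Fin.snoc c z : Fin (n + 1) → A) ∘ Fin.snoc (Fin.castSucc ∘ f) (Fin.last n) := by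
      simp only [Fin.comp_snoc, Fin.snoc_last, ← Function.comp_assoc, Fin.snoc_comp_castSucc]
    refine bfEquiv_iff.2 ⟨h.qfEquiv.comp f, fun β hβ => ?_⟩
    simp only [snoc_comp]
    obtain ⟨forth, back⟩ := (bfEquiv_iff.1 h).2 β hβ
    exact ⟨fun x => (forth x).imp fun _ h' => ih β hβ h' _,
      fun y => (back y).imp fun _ h' => ih β hβ h' _⟩

theorem exists_append {k : ℕ} (h : BFEquiv L M N (β + k) n a b) (x : Fin k → M) :
    ∃ y : Fin k → N, BFEquiv L M N β (n + k) (Fin.append a x) (Fin.append b y) := by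
  induction k generalizing β with
  | zero => exact ⟨Fin.elim0, by simpa [Fin.append_right_nil] using h⟩
  | succ k ih =>
    have h' : BFEquiv L M N (β + 1 + k) n a b := by
      rwa [add_assoc, ← Nat.cast_one, ← Nat.cast_add, Nat.add_comm]
    obtain ⟨y, hy⟩ := ih h' (Fin.init x)
    obtain ⟨z, hz⟩ := ((bfEquiv_iff.1 hy).2 β (lt_add_one β)).1 (x (Fin.last k))
    refine ⟨Fin.snoc y z, ?_⟩
    rwa [Fin.append_snoc, ← Fin.snoc_init_self x, Fin.append_snoc]

end BFEquiv

theorem BFEquivInf.of_backAndForth (S : ∀ n, (Fin n → M) → (Fin n → N) → Prop)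
    (qfEquiv : ∀ n a b, S n a b → QFEquiv L M N a b)
    (forth : ∀ n a b, S n a b → ∀ x, ∃ y, S (n + 1) (Fin.snoc a x) (Fin.snoc b y))
    (back : ∀ n a b, S n a b → ∀ y, ∃ x, S (n + 1) (Fin.snoc a x) (Fin.snoc b y))
    {n : ℕ} {a : Fin n → M} {b : Fin n → N} (h : S n a b) : BFEquivInf L M N n a b := by
  intro α
  induction α using WellFoundedLT.induction generalizing n with
  | ind α ih =>
    exact bfEquiv_iff.2 ⟨qfEquiv n a b h, fun β hβ =>
      ⟨fun x => (forth n a b h x).imp fun _ => ih β hβ,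
        fun y => (back n a b h y).imp fun _ => ih β hβ⟩⟩

variable (L) in
/-- `(M, c) ≡_α (N, d)` for single elements `c` and `d`. -/
def PointEquiv (α : Ordinal.{w}) (c : M) (d : N) : Prop :=
  BFEquiv L M N α 1 (fun _ => c) (fun _ => d)

theorem BFEquiv.pointEquiv {α : Ordinal.{w}} {n : ℕ} {a : Fin n → M} {b : Fin n → N}
    (h : BFEquiv L M N α n a b) (i : Fin n) : PointEquiv L α (a i) (b i) :=
  h.comp fun _ => i

namespace PointEquiv

variable {α β : Ordinal.{w}} {c : M} {d : N}

theorem mono (hβα : β ≤ α) (h : PointEquiv L α c d) : PointEquiv L β c d :=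
  BFEquiv.mono hβα h

theorem symm (h : PointEquiv L α c d) : PointEquiv L α d c :=
  BFEquiv.symm h

theorem trans {e : K} (hcd : PointEquiv L α c d) (hde : PointEquiv L α d e) :
    PointEquiv L α c e :=
  BFEquiv.trans hcd hde

end PointEquiv

end ScottTools

end BackAndForth

theorem exists_lt_omega_one_forall_stable {ι : Type*} [Countable ι]
    {S : ι → Ordinal.{w} → Prop} (hS : ∀ i, Antitone (S i)) {α₀ : Ordinal.{w}} (hα₀ : α₀ < ω₁) :
    ∃ α < ω₁, α₀ ≤ α ∧ ∀ i, S i α → ∀ γ < ω₁, S i γ := by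
  have exists_index (i : ι) : ∃ β < ω₁, S i β → ∀ γ < ω₁, S i γ := by
    by_cases h : ∃ β < ω₁, ¬ S i β
    · obtain ⟨β, hβ, hSβ⟩ := h
      exact ⟨β, hβ, fun h => absurd h hSβ⟩
    · push Not at h
      exact ⟨α₀, hα₀, fun _ => h⟩
  choose f hf_lt hf using exists_index
  have le_sup (i : ι) : f i ≤ max α₀ (⨆ i, f i) :=
    (Ordinal.le_iSup f i).trans (le_max_right _ _)
  exact ⟨max α₀ (⨆ i, f i), max_lt hα₀ (Ordinal.iSup_lt_omega_one hf_lt), le_max_left _ _,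
    fun i hi => hf i (hS i (le_sup i) hi)⟩

section BinarySplitting

namespace PP

theorem exists_eq_var {P : Type u} {n : ℕ} (t : (LP P).Term (Fin n ⊕ Fin 0)) :
    ∃ i, t = Language.Term.var (Sum.inl i) := by
  rcases t with (i | i) | ⟨f, _⟩
  · exact ⟨i, rfl⟩
  · exact i.elim0
  · exact Empty.elim f

theorem qfEquiv_iff {P : Type u} {M N : Type w} [(LP P).Structure M] [(LP P).Structure N]
    {n : ℕ} {a : Fin n → M} {b : Fin n → N} :
    QFEquiv (LP P) M N a b ↔
      ∀ i j, (a i = a j ↔ b i = b j) ∧ ∀ p : P, Rel p (a i) (a j) ↔ Rel p (b i) (b j) := by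
  rw [qfEquiv_iff_isAtomic]
  constructor
  · intro h i j
    refine ⟨?_, fun p => ?_⟩
    · simpa [Language.Formula.realize_equal] using
        h ((Language.Term.var i).equal (Language.Term.var j)) (.equal _ _)
    · let R : (LP P).Relations 2 := ⟨⟨rfl⟩, p⟩
      exact Language.Formula.realize_rel₂.symm.trans <|
        (h (R.formula₂ (.var i) (.var j)) (.rel _ _)).trans Language.Formula.realize_rel₂
  · rintro h _ (⟨s, t⟩ | ⟨⟨⟨rfl⟩, p⟩, ts⟩)
    · obtain ⟨i, rfl⟩ := exists_eq_var s
      obtain ⟨j, rfl⟩ := exists_eq_var t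
      simpa [Language.Formula.Realize] using (h i j).1
    · obtain ⟨i, hi⟩ := exists_eq_var (ts 0)
      obtain ⟨j, hj⟩ := exists_eq_var (ts 1)
      obtain rfl : ts = ![Language.Term.var (Sum.inl i), Language.Term.var (Sum.inl j)] := by
        rw [← hi, ← hj]
        exact (FinVec.etaExpand_eq ts).symm
      let R : (LP P).Relations 2 := ⟨⟨rfl⟩, p⟩
      have realize_iff {A : Type w} [(LP P).Structure A] (v : Fin n → A) :
          Language.Formula.Realize
            (R.boundedFormula ![.var (Sum.inl i), .var (Sum.inl j)]) v ↔
              Rel p (v i) (v j) := Language.BoundedFormula.realize_rel₂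
      exact (realize_iff a).trans (((h i j).2 p).trans (realize_iff b).symm)

variable {P : Type u} {M : Type w} [(LP P).Structure M]

/-- `E_{<r}(x, y)`. -/
def RelBelow (le : P → P → Prop) (r : P) (x y : M) : Prop :=
  ∀ p, le p r → p ≠ r → Rel p x y

/-- The part of `T_P` with `δ = 2` that bounds the Scott rank: each `E_r` is an equivalence
relation which cuts every `E_{<r}`-class into at most two classes. -/
structure IsBinarySplitting (le : P → P → Prop) (M : Type w) [(LP P).Structure M] : Prop where
  equivalence : ∀ p : P, Equivalence fun x y : M => Rel p x y
  rel_of_le : ∀ {p q : P}, le p q → ∀ {x y : M}, Rel q x y → Rel p x y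
  rel_of_not_rel : ∀ {r : P} {x y z : M}, RelBelow le r x z → RelBelow le r y z →
    ¬ Rel r x z → ¬ Rel r y z → Rel r x y

theorem ModelsTP.isBinarySplitting {le : P → P → Prop} (hM : ModelsTP le (fun _ => 2) M) :
    IsBinarySplitting le M := by
  obtain ⟨equivalence, refines, splits, -⟩ := hM
  refine ⟨equivalence, fun hpq => refines _ _ hpq _ _, fun {r x y z} hx hy hxz hyz => ?_⟩
  obtain ⟨f, -, -, hf⟩ := splits r z
  obtain ⟨i, hi⟩ := hf x hx
  obtain ⟨j, hj⟩ := hf y hy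
  obtain ⟨k, hk⟩ := hf z fun p _ _ => (equivalence p).refl z
  have rel_of_eq {u v : M} {s t : Fin 2} (hu : Rel r u (f s)) (hv : Rel r v (f t))
      (hst : s = t) : Rel r u v :=
    (equivalence r).trans hu ((equivalence r).symm (hst ▸ hv))
  have hik : i ≠ k := fun h => hxz (rel_of_eq hi hk h)
  have hjk : j ≠ k := fun h => hyz (rel_of_eq hj hk h)
  exact rel_of_eq hi hj (by lia)

/- Each `E_{<r}`-class picks a representative, and the code of a point records whether it is
`E_r`-equivalent to the representative of its class. -/
theorem IsBinarySplitting.exists_code {le : P → P → Prop} (h : IsBinarySplitting le M) :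
    ∃ code : M → P → ZMod 2, ∀ r x y,
      Rel r x y ↔ RelBelow le r x y ∧ code x r = code y r := by
  classical
  let below (r : P) : Setoid M :=
    ⟨RelBelow le r, fun x p _ _ => (h.equivalence p).refl x,
      fun hxy p hp hne => (h.equivalence p).symm (hxy p hp hne),
      fun hxy hyz p hp hne => (h.equivalence p).trans (hxy p hp hne) (hyz p hp hne)⟩
  let rep (r : P) (x : M) : M := (Quotient.mk (below r) x).out
  have below_rep (r : P) (x : M) : RelBelow le r x (rep r x) :=
    (below r).symm (Quotient.mk_out x)
  refine ⟨fun x r => if Rel r x (rep r x) then 0 else 1, fun r x y => ?_⟩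
  have code_eq_iff {s t : Prop} :
      (if s then 0 else 1 : ZMod 2) = (if t then 0 else 1) ↔ (s ↔ t) := by
    by_cases s <;> by_cases t <;> simp [*]
  rw [code_eq_iff]
  constructor
  · intro hxy
    have hbelow : RelBelow le r x y := fun p hp _ => h.rel_of_le hp hxy
    have rep_eq : rep r x = rep r y := congrArg Quotient.out (Quotient.sound hbelow)
    rw [rep_eq]
    exact ⟨hbelow, (h.equivalence r).trans ((h.equivalence r).symm hxy),
      (h.equivalence r).trans hxy⟩
  · rintro ⟨hbelow, hiff⟩
    have rep_eq : rep r x = rep r y := congrArg Quotient.out (Quotient.sound hbelow)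
    have below_rep_x := below_rep r x
    rw [rep_eq] at hiff below_rep_x
    by_cases hx : Rel r x (rep r y)
    · exact (h.equivalence r).trans hx ((h.equivalence r).symm (hiff.1 hx))
    · exact h.rel_of_not_rel below_rep_x (below_rep r y) hx (mt hiff.2 hx)

end PP

end BinarySplitting

section ModelsOfTP3

local notation "L₃" => LP (ℕ ⊕ ℕ)

variable {M : Type w} [(LP (ℕ ⊕ ℕ)).Structure M]

/-- Points of a model of `T_{P₃}` as pairs of binary sequences: `base` decides the relations
`E_{pₙ}`, and two points whose bases agree up to `m` are `E_{qₘ}`-equivalent if and only if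
their `fib` agree at `m`. The values lie in `ZMod 2` rather than `Bool` so that differences
of sequences can be formed. -/
structure Coding (M : Type w) [(LP (ℕ ⊕ ℕ)).Structure M] where
  base : M → ℕ → ZMod 2
  fib : M → ℕ → ZMod 2
  rel_inl_iff : ∀ n x y, Rel (Sum.inl n : ℕ ⊕ ℕ) x y ↔ base x n = base y n
  rel_inr_iff : ∀ m x y, Rel (Sum.inr m : ℕ ⊕ ℕ) x y ↔
    (∀ i ≤ m, base x i = base y i) ∧ fib x m = fib y m

theorem PP.IsBinarySplitting.nonempty_coding (h : IsBinarySplitting le3 M) :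
    Nonempty (Coding M) := by
  obtain ⟨code, hcode⟩ := h.exists_code
  have rel_inl_iff (n : ℕ) (x y : M) :
      Rel (Sum.inl n : ℕ ⊕ ℕ) x y ↔ code x (Sum.inl n) = code y (Sum.inl n) := by
    rw [hcode, RelBelow]
    simp [le3]
  refine ⟨fun x n => code x (Sum.inl n), fun x m => code x (Sum.inr m), rel_inl_iff,
    fun m x y => ?_⟩
  rw [hcode, RelBelow]
  simp [le3, rel_inl_iff]

/-- The map `c ↦ d`, `x ↦ y` preserves the relations between the two points. -/
def Parallel (c d x y : M) : Prop :=
  ∀ p : ℕ ⊕ ℕ, Rel p c x ↔ Rel p d y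

theorem zmod_two_eq_iff_eq_iff_sub_eq_sub {a b c d : ZMod 2} :
    (a = c ↔ b = d) ↔ b - a = d - c := by
  decide +revert

namespace Coding

variable (K : Coding M) {c d x y : M}

theorem parallel_iff : Parallel c d x y ↔ K.base d - K.base c = K.base y - K.base x ∧
    ∀ m, (∀ i ≤ m, K.base c i = K.base x i) →
      K.fib d m - K.fib c m = K.fib y m - K.fib x m := by
  have base_iff : (∀ n, Rel (Sum.inl n : ℕ ⊕ ℕ) c x ↔ Rel (Sum.inl n : ℕ ⊕ ℕ) d y) ↔
      K.base d - K.base c = K.base y - K.base x := by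
    simp only [K.rel_inl_iff, zmod_two_eq_iff_eq_iff_sub_eq_sub, funext_iff, Pi.sub_apply]
  rw [Parallel, Sum.forall, base_iff]
  refine and_congr_right fun hbase => forall_congr' fun m => ?_
  have agree_iff : (∀ i ≤ m, K.base c i = K.base x i) ↔ ∀ i ≤ m, K.base d i = K.base y i :=
    forall₂_congr fun i _ => zmod_two_eq_iff_eq_iff_sub_eq_sub.2 (congrFun hbase i)
  rw [K.rel_inr_iff, K.rel_inr_iff, ← agree_iff, and_congr_right_iff,
    zmod_two_eq_iff_eq_iff_sub_eq_sub]

end Coding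

namespace Parallel

theorem refl (K : Coding M) (x y : M) : Parallel x y x y :=
  K.parallel_iff.2 ⟨rfl, fun _ _ => rfl⟩

theorem symm (K : Coding M) {c d x y : M} (h : Parallel c d x y) : Parallel x y c d :=
  K.parallel_iff.2 ⟨(K.parallel_iff.1 h).1.symm,
    fun m hm => ((K.parallel_iff.1 h).2 m fun i hi => (hm i hi).symm).symm⟩

theorem swap {c d x y : M} (h : Parallel c d x y) : Parallel d c y x :=
  fun p => (h p).symm

variable (K : Coding M) {c d x y x' y' : M}

theorem base_sub (h : Parallel c d x y) : K.base d - K.base c = K.base y - K.base x :=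
  (K.parallel_iff.1 h).1

theorem fib_sub (h : Parallel c d x y) {m : ℕ} (hm : ∀ i ≤ m, K.base c i = K.base x i) :
    K.fib d m - K.fib c m = K.fib y m - K.fib x m :=
  (K.parallel_iff.1 h).2 m hm

theorem base_eq_iff (h : Parallel c d x y) : K.base c = K.base x ↔ K.base d = K.base y := by
  simp only [funext_iff, ← K.rel_inl_iff]
  exact forall_congr' fun n => h (Sum.inl n)

theorem trans_of_base_eq (h : Parallel c d x y) (h' : Parallel c d x' y')
    (hbase : K.base c = K.base x) : Parallel x y x' y' := by
  refine K.parallel_iff.2 ⟨(h.base_sub K).symm.trans (h'.base_sub K), fun m hm => ?_⟩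
  exact (h.fib_sub K fun i _ => congrFun hbase i).symm.trans
    (h'.fib_sub K fun i hi => (congrFun hbase i).trans (hm i hi))

theorem congr_right (h : Parallel c d x y) (hbase : K.base x = K.base x')
    (hfib : K.fib x = K.fib x') : Parallel c d x' y := by
  rw [K.parallel_iff] at h ⊢
  rwa [← hbase, ← hfib]

theorem fib_eq (h : Parallel c d x d) : K.fib c = K.fib x := by
  have hbase : K.base c = K.base x := (h.base_eq_iff K).2 rfl
  exact funext fun m => sub_right_injective (h.fib_sub K fun i _ => congrFun hbase i)

end Parallel

theorem ScottTools.QFEquiv.parallel {n : ℕ} {a b : Fin n → M} (h : QFEquiv L₃ M M a b)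
    (i j : Fin n) : Parallel (a i) (b i) (a j) (b j) :=
  (qfEquiv_iff.1 h i j).2

theorem ScottTools.QFEquiv.snoc (K : Coding M) {n : ℕ} {a b : Fin n → M} {x y : M}
    (h : QFEquiv L₃ M M a b) (heq : ∀ i, a i = x ↔ b i = y)
    (hpar : ∀ i, Parallel (a i) (b i) x y) :
    QFEquiv L₃ M M (Fin.snoc a x : Fin (n + 1) → M) (Fin.snoc b y) := by
  refine qfEquiv_iff.2 fun i j => ?_
  induction i using Fin.lastCases with
  | last =>
    induction j using Fin.lastCases with
    | last => simpa only [Fin.snoc_last] using ⟨by simp only, Parallel.refl K x y⟩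
    | cast j =>
      simp only [Fin.snoc_last, Fin.snoc_castSucc, eq_comm (a := x), eq_comm (a := y)]
      exact ⟨heq j, (hpar j).symm K⟩
  | cast i =>
    induction j using Fin.lastCases with
    | last => simpa only [Fin.snoc_last, Fin.snoc_castSucc] using ⟨heq i, hpar i⟩
    | cast j => simpa only [Fin.snoc_castSucc] using qfEquiv_iff.1 h i j

namespace ScottTools.PointEquiv

variable {β : Ordinal.{w}} {c d : M}

theorem exists_parallel_tuple {k : ℕ} (h : PointEquiv L₃ (β + k) c d) (x : Fin k → M) :
    ∃ y : Fin k → M, (∀ i, PointEquiv L₃ β (x i) (y i) ∧ Parallel c d (x i) (y i)) ∧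
      ∀ i j, x i = x j ↔ y i = y j := by
  obtain ⟨y, hy⟩ := BFEquiv.exists_append h x
  refine ⟨y, fun i => ⟨?_, ?_⟩, fun i j => ?_⟩
  · simpa only [Fin.append_right] using hy.pointEquiv (Fin.natAdd 1 i)
  · simpa only [Fin.append_left, Fin.append_right] using
      hy.qfEquiv.parallel (Fin.castAdd k 0) (Fin.natAdd 1 i)
  · simpa only [Fin.append_right] using
      (qfEquiv_iff.1 hy.qfEquiv (Fin.natAdd 1 i) (Fin.natAdd 1 j)).1

theorem exists_parallel (h : PointEquiv L₃ (β + 1) c d) (x : M) :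
    ∃ y, PointEquiv L₃ β x y ∧ Parallel c d x y := by
  obtain ⟨y, hy, -⟩ := exists_parallel_tuple (k := 1) (by rwa [Nat.cast_one]) fun _ => x
  exact ⟨y 0, hy 0⟩

theorem exists_parallel_notMem (h : PointEquiv L₃ ω c d) {A B : Finset M}
    (hBA : B.card < A.card) : ∃ z ∈ A, ∃ y ∉ B, Parallel c d z y := by
  classical
  have h' : PointEquiv L₃ (0 + A.card) c d := by
    rw [zero_add]
    exact h.mono (Ordinal.natCast_lt_omega0 _).le
  obtain ⟨y, hy, hinj⟩ := h'.exists_parallel_tuple fun i => (A.equivFin.symm i : M)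
  have y_injective : Function.Injective y := fun i j hij =>
    A.equivFin.symm.injective (Subtype.ext ((hinj i j).2 hij))
  have hcard : B.card < (Finset.univ.image y).card := by
    rwa [Finset.card_image_of_injective _ y_injective, Finset.card_fin]
  obtain ⟨_, hmem, hnotMem⟩ := Finset.exists_mem_notMem_of_card_lt_card hcard
  obtain ⟨i, -, rfl⟩ := Finset.mem_image.1 hmem
  exact ⟨_, (A.equivFin.symm i).2, y i, hnotMem, (hy i).2⟩

end ScottTools.PointEquiv

/-- Two `α`-equivalent points of one fiber of `base` can be made `γ`-equivalent by changing
the second one within the fiber, without affecting any given initial segment of its `fib`. -/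
def Coding.FiberLifting (K : Coding M) (α γ : Ordinal.{w}) : Prop :=
  ∀ x y, PointEquiv L₃ α x y → K.base x = K.base y →
    ∀ l, ∃ z, PointEquiv L₃ γ x z ∧ K.base x = K.base z ∧ ∀ m < l, K.fib y m = K.fib z m

/- For a pair in one fiber, the initial segments of `base` and of the displacement in `fib`
take countably many values, so the set of values realized by `α`-equivalent pairs is constant
from some countable `α` on; such a pair is then moved to a prescribed first point. -/
theorem Coding.exists_fiberLifting (K : Coding M) :
    ∃ α < ω₁, ω ≤ α ∧ ∀ γ < ω₁, K.FiberLifting α γ := by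
  let profile (c d : M) (k : ℕ) : ZMod 2 × ZMod 2 := (K.base c k, K.fib d k - K.fib c k)
  let Realized (s : ℕ × List (ZMod 2 × ZMod 2)) (α : Ordinal.{w}) : Prop :=
    ∃ c d, PointEquiv L₃ α c d ∧ K.base c = K.base d ∧ PiNat.res (profile c d) s.1 = s.2
  have realized_antitone (s) : Antitone (Realized s) :=
    fun _ _ hle ⟨c, d, hcd, h⟩ => ⟨c, d, hcd.mono hle, h⟩
  obtain ⟨α, hα, hωα, hstable⟩ :=
    exists_lt_omega_one_forall_stable realized_antitone Ordinal.omega0_lt_omega_one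
  refine ⟨α, hα, hωα, fun γ hγ x y hxy hbase l => ?_⟩
  have hγ' : γ + 1 < ω₁ := (Cardinal.isSuccLimit_omega 1).add_one_lt hγ
  obtain ⟨c, d, hcd, hbase_cd, hres⟩ :=
    hstable (l, PiNat.res (profile x y) l) ⟨x, y, hxy, hbase, rfl⟩ (γ + 1) hγ'
  obtain ⟨z, hxz, hpar⟩ := hcd.exists_parallel x
  have hprofile {m : ℕ} (hm : m < l) : profile c d m = profile x y m :=
    PiNat.res_eq_res.1 hres hm
  refine ⟨z, hxz, ?_, fun m hm => ?_⟩
  · linear_combination hpar.base_sub K + hbase_cd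
  · have hfib : K.fib d m - K.fib c m = K.fib y m - K.fib x m := (Prod.ext_iff.1 (hprofile hm)).2
    have hfib' := hpar.fib_sub K fun i hi => (Prod.ext_iff.1 (hprofile (hi.trans_lt hm))).1
    linear_combination hfib' - hfib

namespace Coding

variable {K : Coding M} {α : Ordinal.{w}} {n : ℕ} {a b : Fin n → M} {x y : M}

/-- The back-and-forth system witnessing `≡_∞`. The tuples must have the same displacement in
`base` as some pair that is still `α + 2`-equivalent, and each pair of entries must be parallel
to some pair in its fiber that is still `α + 1`-equivalent. -/
structure Matched (K : Coding M) (α : Ordinal.{w}) {n : ℕ} (a b : Fin n → M) : Prop where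
  pos : 0 < n
  qfEquiv : QFEquiv L₃ M M a b
  base_witness : ∃ c d, PointEquiv L₃ (α + 1 + 1) c d ∧
    ∀ i, K.base d - K.base c = K.base (b i) - K.base (a i)
  fiber_witness : ∀ i, ∃ c d, PointEquiv L₃ (α + 1) c d ∧ K.base c = K.base (a i) ∧
    Parallel c d (a i) (b i)

namespace Matched

theorem of_bfEquiv (hn : 0 < n) (h : BFEquiv L₃ M M (α + 1 + 1) n a b) : K.Matched α a b where
  pos := hn
  qfEquiv := h.qfEquiv
  base_witness := ⟨a ⟨0, hn⟩, b ⟨0, hn⟩, h.pointEquiv _,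
    fun i => (h.qfEquiv.parallel _ i).base_sub K⟩
  fiber_witness i := ⟨a i, b i, (h.mono le_self_add).pointEquiv i, rfl, Parallel.refl K _ _⟩

theorem symm (h : K.Matched α a b) : K.Matched α b a where
  pos := h.pos
  qfEquiv := h.qfEquiv.symm
  base_witness := by
    obtain ⟨c, d, hcd, hbase⟩ := h.base_witness
    exact ⟨d, c, hcd.symm, fun i => by linear_combination -hbase i⟩
  fiber_witness i := by
    obtain ⟨c, d, hcd, hbase, hpar⟩ := h.fiber_witness i
    exact ⟨d, c, hcd.symm, (hpar.base_eq_iff K).1 hbase, hpar.swap⟩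

theorem snoc (h : K.Matched α a b) (heq : ∀ i, a i = x ↔ b i = y)
    (hpar : ∀ i, Parallel (a i) (b i) x y)
    (hxy : ∃ c d, PointEquiv L₃ (α + 1) c d ∧ K.base c = K.base x ∧ Parallel c d x y) :
    K.Matched α (Fin.snoc a x : Fin (n + 1) → M) (Fin.snoc b y) where
  pos := n.succ_pos
  qfEquiv := h.qfEquiv.snoc K heq hpar
  base_witness := by
    obtain ⟨c, d, hcd, hbase⟩ := h.base_witness
    have hbase_xy : K.base d - K.base c = K.base y - K.base x :=
      (hbase ⟨0, h.pos⟩).trans ((hpar _).base_sub K)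
    exact ⟨c, d, hcd, Fin.lastCases (by simpa using hbase_xy) (by simpa using hbase)⟩
  fiber_witness := Fin.lastCases (by simpa using hxy) (by simpa using h.fiber_witness)

theorem exists_snoc_of_base_eq (hω : ω ≤ α) (h : K.Matched α a b) (hx : ∀ j, a j ≠ x)
    {i : Fin n} (hi : K.base (a i) = K.base x) :
    ∃ y, K.Matched α (Fin.snoc a x : Fin (n + 1) → M) (Fin.snoc b y) := by
  classical
  obtain ⟨c, d, hcd, hbase, hpar⟩ := h.fiber_witness i
  let J : Finset (Fin n) := {j | K.base (a j) = K.base x ∧ K.fib (a j) = K.fib x}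
  have card_image_le : (J.image b).card ≤ (J.image a).card := by
    have factors : b.FactorsThrough a := fun j k => (qfEquiv_iff.1 h.qfEquiv j k).1.1
    have image_eq : J.image b = (J.image a).image (Function.extend a b id) := by
      rw [Finset.image_image]
      exact Finset.image_congr fun j _ => (factors.extend_apply id j).symm
    exact image_eq ▸ Finset.card_image_le
  have card_lt : (J.image b).card < (insert x (J.image a)).card := by
    rw [Finset.card_insert_of_notMem (by simpa using fun j _ => hx j)]
    lia
  obtain ⟨z, hz, y, hy, hpar_zy⟩ :=
    (hcd.mono (hω.trans le_self_add)).exists_parallel_notMem card_lt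
  have code_z : K.base z = K.base x ∧ K.fib z = K.fib x := by
    rcases Finset.mem_insert.1 hz with rfl | hz
    · exact ⟨rfl, rfl⟩
    · obtain ⟨j, hj, rfl⟩ := Finset.mem_image.1 hz
      exact (Finset.mem_filter.1 hj).2
  have hpar_xy : Parallel c d x y := hpar_zy.congr_right K code_z.1 code_z.2
  have hpar_all (j : Fin n) : Parallel (a j) (b j) x y :=
    ((hpar.trans_of_base_eq K hpar_xy hbase).trans_of_base_eq K
      (h.qfEquiv.parallel i j) hi).symm K
  have b_ne (j : Fin n) : b j ≠ y := by
    rintro rfl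
    have base_eq : K.base (a j) = K.base x := ((hpar_all j).base_eq_iff K).2 rfl
    exact hy (Finset.mem_image_of_mem b
      (Finset.mem_filter.2 ⟨Finset.mem_univ j, base_eq, (hpar_all j).fib_eq K⟩))
  exact ⟨y, h.snoc (fun j => iff_of_false (hx j) (b_ne j)) hpar_all
    ⟨c, d, hcd, hbase.trans hi, hpar_xy⟩⟩

theorem exists_fiberwise_approx (hK : K.FiberLifting α (α + 1)) (h : K.Matched α a b)
    (x : M) (i : Fin n) (l : ℕ) (hl : ∀ k < l, K.base (a i) k = K.base x k) :
    ∃ y, PointEquiv L₃ (α + 1) x y ∧ K.base (b i) - K.base (a i) = K.base y - K.base x ∧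
      ∀ m < l, K.fib (b i) m - K.fib (a i) m = K.fib y m - K.fib x m := by
  obtain ⟨c, d, hcd, hbase, hpar⟩ := h.fiber_witness i
  obtain ⟨c₀, d₀, hcd₀, hbase₀⟩ := h.base_witness
  obtain ⟨y', hxy', hpar'⟩ := hcd.exists_parallel x
  obtain ⟨y₀, hxy₀, hpar₀⟩ := hcd₀.exists_parallel x
  have y₀_equiv_y' : PointEquiv L₃ α y₀ y' := (hxy₀.mono le_self_add).symm.trans hxy'
  have base_y' : K.base (b i) - K.base (a i) = K.base y' - K.base x :=
    (hpar.base_sub K).symm.trans (hpar'.base_sub K)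
  have base_y₀ : K.base (b i) - K.base (a i) = K.base y₀ - K.base x :=
    (hbase₀ i).symm.trans (hpar₀.base_sub K)
  obtain ⟨y, y₀_equiv_y, base_eq, fib_eq⟩ :=
    hK y₀ y' y₀_equiv_y' (by linear_combination base_y' - base_y₀) l
  refine ⟨y, hxy₀.trans y₀_equiv_y, base_eq ▸ base_y₀, fun m hm => ?_⟩
  calc K.fib (b i) m - K.fib (a i) m
      = K.fib d m - K.fib c m := (hpar.fib_sub K fun k _ => congrFun hbase k).symm
    _ = K.fib y' m - K.fib x m :=
      hpar'.fib_sub K fun k hk => (congrFun hbase k).trans (hl k (hk.trans_lt hm))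
    _ = K.fib y m - K.fib x m := by rw [fib_eq m hm]

theorem exists_snoc_of_forall_base_ne (hK : K.FiberLifting α (α + 1)) (h : K.Matched α a b)
    (hx : ∀ j, K.base (a j) ≠ K.base x) :
    ∃ y, K.Matched α (Fin.snoc a x : Fin (n + 1) → M) (Fin.snoc b y) := by
  have : Nonempty (Fin n) := ⟨⟨0, h.pos⟩⟩
  obtain ⟨i, hi⟩ := Finite.exists_max fun j => PiNat.firstDiff (K.base (a j)) (K.base x)
  obtain ⟨y, hxy, hbase, hfib⟩ := h.exists_fiberwise_approx hK x i
    (PiNat.firstDiff (K.base (a i)) (K.base x)) fun _ => PiNat.apply_eq_of_lt_firstDiff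
  have hpar (j : Fin n) : Parallel (a j) (b j) x y := by
    have hji := h.qfEquiv.parallel j i
    refine K.parallel_iff.2 ⟨(hji.base_sub K).trans hbase, fun m hm => ?_⟩
    have lt_firstDiff : m < PiNat.firstDiff (K.base (a i)) (K.base x) := by
      refine lt_of_lt_of_le ?_ (hi j)
      by_contra! hle
      exact PiNat.apply_firstDiff_ne (hx j) (hm _ hle)
    refine (hji.fib_sub K fun k hk => (hm k hk).trans ?_).trans (hfib m lt_firstDiff)
    exact (PiNat.apply_eq_of_lt_firstDiff (hk.trans_lt lt_firstDiff)).symm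
  have a_ne (j : Fin n) : a j ≠ x := fun h => hx j (congrArg K.base h)
  have b_ne (j : Fin n) : b j ≠ y := fun h =>
    hx j (((hpar j).base_eq_iff K).2 (congrArg K.base h))
  exact ⟨y, h.snoc (fun j => iff_of_false (a_ne j) (b_ne j)) hpar
    ⟨x, y, hxy, rfl, Parallel.refl K x y⟩⟩

theorem exists_snoc (hω : ω ≤ α) (hK : K.FiberLifting α (α + 1)) (h : K.Matched α a b)
    (x : M) : ∃ y, K.Matched α (Fin.snoc a x : Fin (n + 1) → M) (Fin.snoc b y) := by
  by_cases hmem : ∃ j, a j = x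
  · obtain ⟨j, rfl⟩ := hmem
    exact ⟨b j, h.snoc (fun i => (qfEquiv_iff.1 h.qfEquiv i j).1)
      (fun i => h.qfEquiv.parallel i j) (h.fiber_witness j)⟩
  push Not at hmem
  by_cases hfiber : ∃ i, K.base (a i) = K.base x
  · obtain ⟨i, hi⟩ := hfiber
    exact h.exists_snoc_of_base_eq hω hmem hi
  · push Not at hfiber
    exact h.exists_snoc_of_forall_base_ne hK hfiber

theorem bfEquivInf (hω : ω ≤ α) (hK : K.FiberLifting α (α + 1)) (h : K.Matched α a b) :
    BFEquivInf L₃ M M n a b :=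
  .of_backAndForth (fun _ => K.Matched α) (fun _ _ _ h => h.qfEquiv)
    (fun _ _ _ h x => h.exists_snoc hω hK x)
    (fun _ _ _ h y => (h.symm.exists_snoc hω hK y).imp fun _ => symm) h

end Matched

end Coding

end ModelsOfTP3

theorem scottRank_lt_omega1_of_TP3_general (M : Type w) [(LP (ℕ ⊕ ℕ)).Structure M]
    (hM : IsBinarySplitting le3 M) :
    ScottRank (LP (ℕ ⊕ ℕ)) M < (Cardinal.aleph 1).ord := by
  obtain ⟨K⟩ := hM.nonempty_coding
  obtain ⟨α, hα, hω, hlift⟩ := K.exists_fiberLifting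
  have add_one_lt {β : Ordinal.{w}} : β < ω₁ → β + 1 < ω₁ :=
    (Cardinal.isSuccLimit_omega 1).add_one_lt
  rw [Cardinal.ord_aleph]
  refine (csInf_le' fun n a b hab => ?_).trans_lt (add_one_lt (add_one_lt hα))
  rcases n.eq_zero_or_pos with rfl | hn
  · rw [Subsingleton.elim a b]
    exact fun β => .refl β b
  · exact (Coding.Matched.of_bfEquiv (K := K) hn hab).bfEquivInf hω (hlift _ (add_one_lt hα))

/-- Every model of `T_{P₃}` (with `δ₃` identically `2`) has Scott rank strictly less
than `ω₁`. -/
theorem scottRank_lt_omega1_of_TP3 (M : Type w) [(LP (ℕ ⊕ ℕ)).Structure M]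
    (hM : ModelsTP le3 (fun _ => 2) M) :
    ScottRank (LP (ℕ ⊕ ℕ)) M < (Cardinal.aleph 1).ord :=
  scottRank_lt_omega1_of_TP3_general M hM.isBinarySplitting
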